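/- Let q ≥ 2, n ≥ 2, gcd(d,q) = 1, and let o_n = (O,0^n) = (x_0,x_1,…,x_{L−1}) be the generalized prefer-opposite sequence. Let β = d^{−1}(q−1) (mod q), where d^{−1} is the inverse of d modulo q, and let (x̂_0,…,x̂_{L−2}) = D_β(o_n) be the termwise image x̂_i = β(x_{i+1} − x_i) (mod q). Form the subsequence of (x̂_0,…,x̂_{L−2}) obtained by deleting every digit x̂_i such that the (n−1)-word (x̂_{i−n+2},…,x̂_i) already occurs as a contiguous subword of (x̂_0,…,x̂_{i−1}). Then the resulting subsequence is exactly the prefer-higher de Bruijn sequence h_{n−1} of order n−1. -/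

import Mathlib

/-!
The windows of length `n` of a greedy sequence of order `n` are the edges of a trail in the de
Bruijn graph on `(n-1)`-words, and `D_β` maps this graph onto the de Bruijn graph on `(n-2)`-words
as a `q`-fold covering. Since `β d = -1`, the preferred choices `a + d, a + 2 d, …` at a vertex
ending in `a` have images `q - 1, q - 2, …`: the rule of `o_n` is the lift of the prefer-higher
rule.

Run the construction of `o_n` and suppose that the cleaned image `g` of the current stage `x` is a
stage of `h_{n-1}` with the same windows as the image. Let `v` be the current vertex of `x`, and let
the next step create a new edge from `p = D_β v`, labelled `b`. If `p` were not the current vertex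
of `g`, then counting the edges at `v` and `p` (without the initial one among the outgoing ones)
would give
`out_x v + 1 = in_x v ≤ in_g p = out_g p ≤ out_x v`,
where the first inequality holds because lifts to `v` are unique, and the second because the digits
that `g` has used at `p` are above `b`, so that their lifts were preferred by `x` and are used up
at `v`. Hence `p` is the current vertex of `g`, and `b` is its prefer-higher digit.

When `o_n` halts, it is back at `0^(n-1)` with all edges there used. Repeating the last digit is the
least preferred choice, so exhaustion propagates backwards from a vertex ending in `00` to its
predecessors, and therefore reaches every vertex ending in `0`. These lift all `(n-2)`-words, so
that `g` contains every `(n-1)`-word and `h_{n-1}` halts at `g`.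
-/

namespace PaperDB

/-- The last `s` entries of `l`. -/
def lastN {α : Type*} (s : ℕ) (l : List α) : List α := l.drop (l.length - s)

/-- The digit appended by the greedy rule, if any: the most preferred digit `c`
(according to the preference function `P`, evaluated at the last `s` digits,
`P x 0` being the most preferred digit) such that the `n`-window created by
appending `c` has not yet occurred as a contiguous subword. -/
def nextDigit (q s n : ℕ) (P : List (ZMod q) → Fin q → ZMod q)
    (l : List (ZMod q)) : Option (ZMod q) :=
  ((List.finRange q).map (fun i => P (lastN s l) i)).find?
    (fun c => !decide ((lastN (n - 1) l ++ [c]) <:+: l))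

/-- Fuel-bounded greedy extension. -/
def greedyAux (q s n : ℕ) (P : List (ZMod q) → Fin q → ZMod q) :
    ℕ → List (ZMod q) → List (ZMod q)
  | 0, l => l
  | f + 1, l =>
    match nextDigit q s n P l with
    | none => l
    | some c => greedyAux q s n P f (l ++ [c])

/-- The greedy sequence `(P, I)`: fuel `q ^ n` provably suffices for the
construction to halt, since every `n`-word occurs at most once. -/
def greedy (q s n : ℕ) (P : List (ZMod q) → Fin q → ZMod q)
    (I : List (ZMod q)) : List (ZMod q) :=
  greedyAux q s n P (q ^ n) I

/-- The number of occurrences of `w` as a length-`n` contiguous window of `l`. -/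
def windowCount (q n : ℕ) (w l : List (ZMod q)) : ℕ :=
  ((List.range (l.length + 1 - n)).filter
    (fun i => decide ((l.drop i).take n = w))).length

/-- `P` is a preference function (of span `s`): it assigns to every `s`-word a
permutation of the alphabet `ZMod q`. -/
def IsPrefFun (q s : ℕ) (P : List (ZMod q) → Fin q → ZMod q) : Prop :=
  ∀ x : List (ZMod q), x.length = s → Function.Bijective (P x)

/-- The generalized prefer-opposite preference function `O^{(q,d)}`, of span 1:
`O_j(a) = a + j·d (mod q)` for `j = 1,…,q`; the `Fin q`-index `j` denotes column `j+1`. -/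
def OprefL (q d : ℕ) : List (ZMod q) → Fin q → ZMod q :=
  fun x j => x.headI + (((j : ℕ) + 1 : ℕ) : ZMod q) * (d : ZMod q)

/-- The generalized prefer-opposite sequence `o_n = (O, 0^n)`. -/
def oSeq (q n d : ℕ) : List (ZMod q) :=
  greedy q 1 n (OprefL q d) (List.replicate n 0)

/-- The generalized Lempel homomorphism `D_β`: it sends `(x_0,…,x_{L-1})` to
`(β(x_1-x_0), …, β(x_{L-1}-x_{L-2}))`, arithmetic modulo `q`. -/
def Dmap (q : ℕ) (β : ZMod q) (l : List (ZMod q)) : List (ZMod q) :=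
  List.zipWith (fun x y => β * (y - x)) l l.tail

/-- Delete from `l` every digit (at position `i`) whose length-`m` window
`(l_{i-m+1},…,l_i)` ending at it already occurs as a contiguous subword of
`(l_0,…,l_{i-1})`, keeping all other digits. -/
def cleaned (q m : ℕ) (l : List (ZMod q)) : List (ZMod q) :=
  ((List.range l.length).filter fun i =>
      !decide (((l.take (i + 1)).drop (i + 1 - m)) <:+: l.take i)).map
    fun i => l.getD i 0

/-- The prefer-higher preference function: `H_j(a) = q - j` for `j = 1,…,q`,
i.e. the preference order is `q-1, q-2, …, 1, 0` regardless of the last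
digit; the `Fin q`-index `j` denotes column `j+1`. -/
def Hpref (q : ℕ) : List (ZMod q) → Fin q → ZMod q :=
  fun _ j => ((q - 1 - (j : ℕ) : ℕ) : ZMod q)

/-- The prefer-higher (nonbinary Ford) de Bruijn sequence `h_m` of order `m`. -/
def hSeq (q m : ℕ) : List (ZMod q) :=
  greedy q 1 m (Hpref q) (List.replicate m 0)

/-! ### Windows -/

section Windows

variable {α : Type*} {s k m : ℕ} {l l' v w I : List α} {c : α}

theorem length_lastN (h : s ≤ l.length) : (lastN s l).length = s := by
  rw [lastN, List.length_drop, Nat.sub_sub_self h]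

theorem lastN_suffix (s : ℕ) (l : List α) : lastN s l <:+ l :=
  List.drop_suffix _ _

theorem eq_lastN_of_suffix (h : w <:+ l) : w = lastN w.length l :=
  List.suffix_iff_eq_drop.1 h

theorem lastN_concat (s : ℕ) (l : List α) (c : α) :
    lastN (s + 1) (l ++ [c]) = lastN s l ++ [c] := by
  rw [lastN, List.length_append, List.length_singleton, Nat.add_sub_add_right,
    List.drop_append_of_le_length (Nat.sub_le _ _), lastN]

theorem lastN_one_concat (l : List α) (c : α) : lastN 1 (l ++ [c]) = [c] := by
  simp [lastN]

theorem length_lastN_concat (h : s ≤ l.length) (c : α) : (lastN s l ++ [c]).length = s + 1 := by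
  rw [List.length_append, length_lastN h, List.length_singleton]

theorem exists_lastN_succ_eq_cons (h : s + 1 ≤ l.length) :
    ∃ a, lastN (s + 1) l = a :: lastN s l := by
  refine ⟨l[l.length - (s + 1)], ?_⟩
  rw [lastN, List.drop_eq_getElem_cons (by omega), lastN]
  congr 2
  omega

theorem infix_concat_iff_of_length (hw : w.length = k + 1) :
    w <:+: l ++ [c] ↔ w <:+: l ∨ w = lastN k l ++ [c] := by
  rw [← lastN_concat, List.infix_concat_iff, or_comm]
  exact or_congr_right ⟨fun h => hw ▸ eq_lastN_of_suffix h, fun h => h ▸ lastN_suffix _ _⟩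

/-- The contiguous subwords of `l` of length `m`. -/
def windows (m : ℕ) (l : List α) : Set (List α) :=
  {w | w.length = m ∧ w <:+: l}

theorem windows_length (l : List α) : windows l.length l = {l} := by
  ext w
  exact ⟨fun h => h.2.eq_of_length h.1, fun h => h ▸ ⟨rfl, List.infix_rfl⟩⟩

theorem windows_concat (h : k ≤ l.length) (c : α) :
    windows (k + 1) (l ++ [c]) = insert (lastN k l ++ [c]) (windows (k + 1) l) := by
  have hnew := length_lastN_concat h c
  ext w
  constructor
  · rintro ⟨hw, hwl⟩
    exact ((infix_concat_iff_of_length hw).1 hwl).symm.imp id fun h => ⟨hw, h⟩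
  · rintro (rfl | ⟨hw, hwl⟩)
    · exact ⟨hnew, (infix_concat_iff_of_length hnew).2 (.inr rfl)⟩
    · exact ⟨hw, (infix_concat_iff_of_length hw).2 (.inl hwl)⟩

theorem infix_iff_of_windows_eq (h : windows m l = windows m l') (hw : w.length = m) :
    w <:+: l ↔ w <:+: l' :=
  ⟨fun hl => (h ▸ (⟨hw, hl⟩ : w ∈ windows m l) : w ∈ windows m l').2,
    fun hl' => (h ▸ (⟨hw, hl'⟩ : w ∈ windows m l') : w ∈ windows m l).2⟩

theorem finite_windows [Finite α] (m : ℕ) (l : List α) : (windows m l).Finite :=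
  (List.finite_length_eq α m).subset fun _ h => h.1

theorem ncard_windows_le [Finite α] (m : ℕ) (l : List α) :
    (windows m l).ncard ≤ Nat.card α ^ m := by
  have := Fintype.ofFinite α
  calc (windows m l).ncard
      ≤ {w : List α | w.length = m}.ncard :=
        Set.ncard_le_ncard (fun _ h => h.1) (List.finite_length_eq α m)
    _ = Nat.card (List.Vector α m) := rfl
    _ = Nat.card α ^ m := by
        rw [Nat.card_eq_fintype_card, Nat.card_eq_fintype_card, card_vector]

/-- The labels of the edges entering the vertex `v` in the trail of windows of `l`: the digits `a`
such that the window `a v` occurs. -/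
def inDigits (l v : List α) : Set α :=
  {a | a :: v <:+: l}

theorem mem_inDigits {a : α} : a ∈ inDigits l v ↔ a :: v <:+: l :=
  Iff.rfl

/-- The labels of the edges leaving the vertex `v` in the trail of windows of `l` that starts with
the window `I`: the digits `c` such that the window `v c` occurs. The initial window `I` is not
counted, so that `l` has been extended at `v` exactly by these digits. -/
def outDigits (I l v : List α) : Set α :=
  {c | v ++ [c] <:+: l ∧ v ++ [c] ≠ I}

theorem mem_outDigits : c ∈ outDigits I l v ↔ v ++ [c] <:+: l ∧ v ++ [c] ≠ I :=
  Iff.rfl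

theorem ncard_eq_add_ite {s t : Set α} {a : α} {p : Prop} [Decidable p] (hs : s.Finite)
    (ht : ∀ z, z ∈ t ↔ z ∈ s ∨ z = a ∧ p) (ha : p → a ∉ s) :
    t.ncard = s.ncard + if p then 1 else 0 := by
  split_ifs with hp
  · rw [← Set.ncard_insert_of_notMem (ha hp) hs]
    exact congrArg Set.ncard (Set.ext fun z => by simp [ht, hp, or_comm])
  · exact congrArg Set.ncard (Set.ext fun z => by simp [ht, hp])

variable [DecidableEq α]

theorem ncard_inDigits_self (hI : I.length = k + 1) (hv : v.length = k) :
    (inDigits I v).ncard = if v = lastN k I then 1 else 0 := by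
  obtain ⟨a, ha⟩ := exists_lastN_succ_eq_cons hI.ge
  have hmem (z : α) : z ∈ inDigits I v ↔ z ∈ (∅ : Set α) ∨ z = a ∧ v = lastN k I := by
    rw [← List.cons.injEq, ← ha, ← hI, ← eq_lastN_of_suffix List.suffix_rfl]
    simp only [Set.mem_empty_iff_false, false_or]
    exact ⟨fun h => h.eq_of_length (by simp [hv, hI]), fun h => h ▸ List.infix_rfl⟩
  rw [ncard_eq_add_ite Set.finite_empty hmem fun _ => Set.notMem_empty a, Set.ncard_empty, zero_add]

variable [Finite α]

theorem ncard_outDigits_add_ite (hI : I ≠ []) (hfull : ∀ c, v ++ [c] <:+: l) :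
    (outDigits I l v).ncard + (if v = I.dropLast then 1 else 0) = Nat.card α := by
  have hinit (z : α) : v ++ [z] = I ↔ z = I.getLast hI ∧ v = I.dropLast := by
    rw [and_comm, ← List.append_singleton_inj, List.dropLast_append_getLast]
  have hmem (z : α) : z ∈ Set.univ ↔
      z ∈ outDigits I l v ∨ z = I.getLast hI ∧ v = I.dropLast := by
    simp only [Set.mem_univ, mem_outDigits, hfull, true_and, ← hinit, true_iff]
    exact ne_or_eq _ _
  rw [← Set.ncard_univ, ncard_eq_add_ite (Set.toFinite _) hmem]
  exact fun hv h => h.2 ((hinit _).2 ⟨rfl, hv⟩)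

theorem ncard_inDigits_concat (hk : k ≤ l.length) (hc : ¬ lastN k l ++ [c] <:+: l)
    (hv : v.length = k) :
    (inDigits (l ++ [c]) v).ncard =
      (inDigits l v).ncard + if v = lastN k (l ++ [c]) then 1 else 0 := by
  obtain ⟨a, ha⟩ := exists_lastN_succ_eq_cons (s := k) (l := l ++ [c]) (by simpa using hk)
  rw [lastN_concat] at ha
  refine ncard_eq_add_ite (a := a) (Set.toFinite _) (fun z => ?_) fun h ha' => ?_
  · rw [← List.cons.injEq, ← ha]
    exact infix_concat_iff_of_length (by simp [hv])
  · rw [mem_inDigits, h, ← ha] at ha'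
    exact hc ha'

theorem ncard_outDigits_concat (hI : I <:+: l) (hc : ¬ lastN k l ++ [c] <:+: l)
    (hv : v.length = k) :
    (outDigits I (l ++ [c]) v).ncard =
      (outDigits I l v).ncard + if v = lastN k l then 1 else 0 := by
  refine ncard_eq_add_ite (a := c) (Set.toFinite _) (fun z => ?_) fun h hc' => hc (h ▸ hc'.1)
  have hne : v ++ [z] = lastN k l ++ [c] → v ++ [z] ≠ I := fun h h' => hc (h ▸ h' ▸ hI)
  rw [← and_comm (b := z = c), ← List.append_singleton_inj, mem_outDigits, mem_outDigits,
    infix_concat_iff_of_length (by simp [hv] : (v ++ [z]).length = k + 1)]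
  tauto

end Windows

/-! ### The greedy construction -/

section Greedy

variable {q s n k : ℕ} {P : List (ZMod q) → Fin q → ZMod q} {I l l' v : List (ZMod q)}
  {c : ZMod q}

theorem not_infix_of_nextDigit_eq_some (h : nextDigit q s (k + 1) P l = some c) :
    ¬ lastN k l ++ [c] <:+: l := by
  simpa using List.find?_some h

theorem nextDigit_eq_none_iff (hP : Function.Surjective (P (lastN s l))) :
    nextDigit q s (k + 1) P l = none ↔ ∀ c, lastN k l ++ [c] <:+: l := by
  simp [nextDigit, hP.forall]

section Rank

variable {α : Type*} [Preorder α] {f : ZMod q → α}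

theorem surjective_of_strictAnti_comp [NeZero q] {p : Fin q → ZMod q} (hf : StrictAnti (f ∘ p)) :
    Function.Surjective p :=
  ((Fintype.bijective_iff_injective_and_card p).2 ⟨hf.injective.of_comp, by simp⟩).2

theorem nextDigit_eq_some_iff [NeZero q] (hf : StrictAnti (f ∘ P (lastN s l))) :
    nextDigit q s (k + 1) P l = some c ↔
      ¬ lastN k l ++ [c] <:+: l ∧ ∀ c', f c < f c' → lastN k l ++ [c'] <:+: l := by
  have hP := surjective_of_strictAnti_comp hf
  rw [nextDigit, List.find?_eq_some_iff_getElem, hP.forall]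
  simp only [Bool.not_eq_eq_eq_not, Bool.not_true, decide_eq_false_iff_not, List.getElem_map,
    List.getElem_finRange, Bool.not_not, decide_eq_true_eq, List.length_map, List.length_finRange]
  refine and_congr_right fun _ => ⟨?_, fun habove => ?_⟩
  · rintro ⟨i, hi, rfl, hbefore⟩ j hj
    exact hbefore j (hf.lt_iff_gt.1 hj)
  · obtain ⟨i, rfl⟩ := hP c
    exact ⟨i, i.2, rfl, fun j hj => habove ⟨j, hj.trans i.2⟩ (hf hj)⟩

end Rank

/-- One step of the greedy construction. -/
def GreedyStep (q s n : ℕ) (P : List (ZMod q) → Fin q → ZMod q) (l l' : List (ZMod q)) : Prop :=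
  ∃ c, nextDigit q s n P l = some c ∧ l' = l ++ [c]

/-- `l` is a stage of the greedy construction started from `I`, not necessarily the last one. -/
abbrev GreedyStage (q s n : ℕ) (P : List (ZMod q) → Fin q → ZMod q) (I l : List (ZMod q)) : Prop :=
  Relation.ReflTransGen (GreedyStep q s n P) I l

theorem rightUnique_greedyStep : Relator.RightUnique (GreedyStep q s n P) := by
  rintro l _ _ ⟨c, hc, rfl⟩ ⟨c', hc', rfl⟩
  rw [Option.some.inj (hc.symm.trans hc')]

theorem greedyStage_greedyAux (f : ℕ) (l : List (ZMod q)) :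
    GreedyStage q s n P l (greedyAux q s n P f l) := by
  induction f generalizing l with
  | zero => exact .refl
  | succ f ih =>
    rw [greedyAux]
    cases hc : nextDigit q s n P l with
    | none => exact .refl
    | some c => exact (ih _).head ⟨c, hc, rfl⟩

theorem greedyStage_greedy : GreedyStage q s n P I (greedy q s n P I) :=
  greedyStage_greedyAux _ _

theorem nextDigit_greedyAux_eq_none_or_length_eq (f : ℕ) (l : List (ZMod q)) :
    nextDigit q s n P (greedyAux q s n P f l) = none ∨
      (greedyAux q s n P f l).length = l.length + f := by
  induction f generalizing l with
  | zero => exact .inr rfl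
  | succ f ih =>
    rw [greedyAux]
    cases hc : nextDigit q s n P l with
    | none => exact .inl hc
    | some c => simpa [add_assoc, add_comm 1] using ih (l ++ [c])

namespace GreedyStage

theorem isPrefix (h : GreedyStage q s n P I l) : I <+: l := by
  induction h with
  | refl => exact List.prefix_rfl
  | tail _ hstep ih =>
    obtain ⟨c, -, rfl⟩ := hstep
    exact ih.trans (List.prefix_append _ _)

theorem le_length (h : GreedyStage q s n P I l) (hI : I.length = n) : n ≤ l.length :=
  hI ▸ h.isPrefix.length_le

theorem eq_of_nextDigit_eq_none (h : GreedyStage q s n P l l')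
    (hl : nextDigit q s n P l = none) : l = l' := by
  obtain rfl | ⟨_, ⟨c, hc, -⟩, -⟩ := h.cases_head
  · rfl
  · simp [hl] at hc

theorem ncard_windows_add [NeZero q] (h : GreedyStage q s (k + 1) P I l) (hI : I.length = k + 1) :
    (windows (k + 1) l).ncard + k = l.length := by
  induction h with
  | refl => rw [← hI, windows_length, Set.ncard_singleton, hI, add_comm]
  | @tail l _ hl hstep ih =>
    obtain ⟨c, hc, rfl⟩ := hstep
    have hlen := le_length hl hI
    have hnew : lastN k l ++ [c] ∉ windows (k + 1) l := fun h =>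
      not_infix_of_nextDigit_eq_some hc h.2
    rw [windows_concat (by omega), Set.ncard_insert_of_notMem hnew (finite_windows _ _),
      List.length_append, List.length_singleton, ← ih]
    omega

theorem length_le [NeZero q] (h : GreedyStage q s (k + 1) P I l) (hI : I.length = k + 1) :
    l.length ≤ q ^ (k + 1) + k := by
  rw [← h.ncard_windows_add hI]
  gcongr
  simpa using ncard_windows_le (k + 1) l

theorem nextDigit_greedy [NeZero q] (hI : I.length = k + 1) :
    nextDigit q s (k + 1) P (greedy q s (k + 1) P I) = none := by
  refine (nextDigit_greedyAux_eq_none_or_length_eq (q ^ (k + 1)) I).resolve_right fun hlen => ?_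
  have := (greedyStage_greedy (s := s) (P := P)).length_le hI
  rw [greedy] at this
  omega

theorem greedy_eq [NeZero q] (h : GreedyStage q s (k + 1) P I l) (hI : I.length = k + 1)
    (hl : nextDigit q s (k + 1) P l = none) : greedy q s (k + 1) P I = l := by
  rcases Relation.ReflTransGen.total_of_right_unique rightUnique_greedyStep greedyStage_greedy h
    with hgl | hlg
  · exact GreedyStage.eq_of_nextDigit_eq_none hgl (nextDigit_greedy hI)
  · exact (GreedyStage.eq_of_nextDigit_eq_none hlg hl).symm

/-- Every visit to a vertex but the current one is followed by a departure. -/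
theorem ncard_inDigits_eq [NeZero q] (h : GreedyStage q s (k + 1) P I l) (hI : I.length = k + 1)
    (hv : v.length = k) :
    (inDigits l v).ncard = (outDigits I l v).ncard + if v = lastN k l then 1 else 0 := by
  induction h with
  | refl =>
    have hout : outDigits I I v = ∅ := Set.eq_empty_of_forall_notMem fun c hc =>
      hc.2 (hc.1.eq_of_length (by simp [hv, hI]))
    rw [ncard_inDigits_self hI hv, hout, Set.ncard_empty, zero_add]
  | @tail l _ hl hstep ih =>
    obtain ⟨c, hc, rfl⟩ := hstep
    have hnew := not_infix_of_nextDigit_eq_some hc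
    have hlen := le_length hl hI
    rw [ncard_inDigits_concat (by omega) hnew hv,
      ncard_outDigits_concat (isPrefix hl).isInfix hnew hv, ih]

theorem concat_infix_of_lt [NeZero q] {α : Type*} [Preorder α] {f : ZMod q → α} {c' : ZMod q}
    (h : GreedyStage q s (k + 1) P I l) (hI : I.length = k + 1) (hv : v.length = k)
    (hf : ∀ l, lastN k l = v → StrictAnti (f ∘ P (lastN s l)))
    (hc : c ∈ outDigits I l v) (hlt : f c < f c') : v ++ [c'] <:+: l := by
  induction h with
  | refl => exact absurd (hc.1.eq_of_length (by simp [hv, hI])) hc.2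
  | @tail l _ _ hstep ih =>
    obtain ⟨b, hb, rfl⟩ := hstep
    refine List.IsInfix.trans ?_ (List.prefix_append l [b]).isInfix
    rcases (infix_concat_iff_of_length (k := k) (by simp [hv])).1 hc.1 with hold | hnew
    · exact ih ⟨hold, hc.2⟩
    · obtain ⟨rfl, rfl⟩ := List.append_singleton_inj.1 hnew
      exact ((nextDigit_eq_some_iff (hf l rfl)).1 hb).2 c' hlt

theorem lastN_eq_dropLast_of_forall_concat_infix [NeZero q]
    (h : GreedyStage q s (k + 1) P I l) (hI : I.length = k + 1)
    (hfull : ∀ c, lastN k l ++ [c] <:+: l) : lastN k l = I.dropLast := by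
  have hlen := h.le_length hI
  have hout := ncard_outDigits_add_ite (List.ne_nil_of_length_eq_add_one hI) hfull
  have hbal := h.ncard_inDigits_eq hI (length_lastN (by omega : k ≤ l.length))
  have hin := Set.ncard_le_card (inDigits l (lastN k l))
  by_contra hne
  rw [if_neg hne] at hout
  rw [if_pos rfl] at hbal
  omega

theorem cons_infix_of_forall_concat_infix [NeZero q]
    (h : GreedyStage q s (k + 1) P I l) (hI : I.length = k + 1)
    (hend : lastN k l = I.dropLast) (hv : v.length = k) (hfull : ∀ c, v ++ [c] <:+: l)
    (a : ZMod q) : a :: v <:+: l := by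
  have hin : inDigits l v = Set.univ := by
    rw [Set.eq_univ_iff_ncard, h.ncard_inDigits_eq hI hv, hend]
    exact ncard_outDigits_add_ite (List.ne_nil_of_length_eq_add_one hI) hfull
  exact mem_inDigits.1 (hin ▸ Set.mem_univ a)

end GreedyStage

end Greedy

/-! ### Deleting repeated windows -/

section Cleaned

variable {q m : ℕ}

theorem cleaned_concat (l : List (ZMod q)) (c : ZMod q) :
    cleaned q m (l ++ [c]) =
      if lastN m (l ++ [c]) <:+: l then cleaned q m l else cleaned q m l ++ [c] := by
  have hfilter : ((List.range l.length).filter fun i =>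
      !decide ((((l ++ [c]).take (i + 1)).drop (i + 1 - m)) <:+: (l ++ [c]).take i)) =
      (List.range l.length).filter fun i =>
        !decide (((l.take (i + 1)).drop (i + 1 - m)) <:+: l.take i) := by
    refine List.filter_congr fun i hi => ?_
    have hi := List.mem_range.1 hi
    rw [List.take_append_of_le_length hi, List.take_append_of_le_length hi.le]
  have hmap (p : ℕ → Bool) : ((List.range l.length).filter p).map (fun i => (l ++ [c]).getD i 0) =
      ((List.range l.length).filter p).map fun i => l.getD i 0 :=
    List.map_congr_left fun i hi =>
      List.getD_append _ _ _ _ (List.mem_range.1 (List.mem_of_mem_filter hi))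
  have htake : (l ++ [c]).take (l.length + 1) = l ++ [c] := List.take_of_length_le (by simp)
  rw [cleaned, List.length_append, List.length_singleton, List.range_succ, List.filter_append,
    hfilter, List.map_append, hmap, ← cleaned]
  by_cases h : lastN m (l ++ [c]) <:+: l
  · rw [if_pos h]
    rw [lastN, List.length_append, List.length_singleton] at h
    simp [htake, h]
  · rw [if_neg h]
    rw [lastN, List.length_append, List.length_singleton] at h
    simp [htake, h]

theorem cleaned_of_length_le {l : List (ZMod q)} (h : l.length ≤ m) : cleaned q m l = l := by
  induction l using List.reverseRecOn with
  | nil => rfl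
  | append_singleton l c ih =>
    have hlast : lastN m (l ++ [c]) = l ++ [c] := by
      rw [lastN, Nat.sub_eq_zero_of_le h, List.drop_zero]
    rw [List.length_append, List.length_singleton] at h
    rw [cleaned_concat, hlast, ih (by omega), if_neg]
    exact fun hinf => by simpa using hinf.length_le

end Cleaned

/-! ### The map `D_β` -/

section Dmap

variable {q : ℕ} {β : ZMod q} {l w : List (ZMod q)}

theorem length_Dmap (l : List (ZMod q)) : (Dmap q β l).length = l.length - 1 := by
  simp [Dmap]

theorem Dmap_cons_cons (a b : ZMod q) (l : List (ZMod q)) :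
    Dmap q β (a :: b :: l) = β * (b - a) :: Dmap q β (b :: l) :=
  rfl

theorem Dmap_append_cons (l : List (ZMod q)) (a : ZMod q) (t : List (ZMod q)) :
    Dmap q β (l ++ a :: t) = Dmap q β (l ++ [a]) ++ Dmap q β (a :: t) := by
  induction l with
  | nil => rfl
  | cons b l ih =>
    cases l with
    | nil => rfl
    | cons b' l => simpa [Dmap_cons_cons] using ih

theorem Dmap_concat_concat (l : List (ZMod q)) (a c : ZMod q) :
    Dmap q β (l ++ [a] ++ [c]) = Dmap q β (l ++ [a]) ++ [β * (c - a)] := by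
  rw [List.append_assoc]
  exact Dmap_append_cons l a [c]

theorem Dmap_isSuffix (h : w <:+ l) : Dmap q β w <:+ Dmap q β l := by
  obtain ⟨t, rfl⟩ := h
  cases w with
  | nil => exact List.nil_suffix
  | cons a w => exact Dmap_append_cons t a w ▸ List.suffix_append _ _

theorem Dmap_isPrefix (h : w <+: l) : Dmap q β w <+: Dmap q β l := by
  obtain ⟨t, rfl⟩ := h
  induction w using List.reverseRecOn with
  | nil => exact List.nil_prefix
  | append_singleton w a =>
    rw [List.append_assoc, List.singleton_append, Dmap_append_cons w a t]
    exact List.prefix_append _ _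

theorem Dmap_isInfix (h : w <:+: l) : Dmap q β w <:+: Dmap q β l := by
  obtain ⟨t, hwt, htl⟩ := List.infix_iff_prefix_suffix.1 h
  exact (Dmap_isPrefix hwt).isInfix.trans (Dmap_isSuffix htl).isInfix

theorem lastN_Dmap {k : ℕ} (h : k + 1 ≤ l.length) :
    lastN k (Dmap q β l) = Dmap q β (lastN (k + 1) l) := by
  have := eq_lastN_of_suffix (Dmap_isSuffix (β := β) (lastN_suffix (k + 1) l))
  rw [length_Dmap, length_lastN h] at this
  exact this.symm

theorem Dmap_replicate (k : ℕ) (a : ZMod q) :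
    Dmap q β (List.replicate (k + 1) a) = List.replicate k 0 := by
  simp [Dmap, List.zipWith_replicate]

theorem exists_Dmap_concat_eq (hβ : IsUnit β) (p : List (ZMod q)) (a : ZMod q) :
    ∃ u, u.length = p.length ∧ Dmap q β (u ++ [a]) = p := by
  obtain ⟨γ, hγ⟩ := hβ.exists_right_inv
  induction p with
  | nil => exact ⟨[], rfl, rfl⟩
  | cons b p ih =>
    obtain ⟨u, hu, hD⟩ := ih
    obtain ⟨e, t, het⟩ := List.exists_cons_of_ne_nil (List.concat_ne_nil a u)
    refine ⟨(e - γ * b) :: u, by rw [List.length_cons, List.length_cons, hu], ?_⟩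
    rw [List.cons_append, het, Dmap_cons_cons, ← het, hD, sub_sub_cancel, ← mul_assoc, hγ, one_mul]

end Dmap

/-! ### The two preference functions -/

section Preference

variable {q d k : ℕ} {β : ZMod q}

theorem val_Hpref (x : List (ZMod q)) (i : Fin q) : (Hpref q x i).val = q - 1 - i := by
  have := i.2
  rw [Hpref, ZMod.val_natCast, Nat.mod_eq_of_lt (by omega)]

theorem strictAnti_val_Hpref (x : List (ZMod q)) : StrictAnti (ZMod.val ∘ Hpref q x) := by
  intro i j hij
  have : (i : ℕ) < j := hij
  simp only [Function.comp_apply, val_Hpref]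
  omega

theorem mul_OprefL_sub_headI (hβ : β * d = -1) (x : List (ZMod q)) (i : Fin q) :
    β * (OprefL q d x i - x.headI) = Hpref q x i := by
  have hsum : ((q - 1 - (i : ℕ) : ℕ) : ZMod q) + (((i : ℕ) + 1 : ℕ) : ZMod q) = 0 := by
    rw [← Nat.cast_add, show q - 1 - (i : ℕ) + (i + 1) = q by omega, ZMod.natCast_self]
  rw [OprefL, Hpref]
  linear_combination (((i : ℕ) + 1 : ℕ) : ZMod q) * hβ - hsum

theorem strictAnti_val_OprefL (hβ : β * d = -1) (x : List (ZMod q)) :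
    StrictAnti ((fun c => (β * (c - x.headI)).val) ∘ OprefL q d x) := by
  have : (fun c => (β * (c - x.headI)).val) ∘ OprefL q d x = ZMod.val ∘ Hpref q x :=
    funext fun i => congrArg ZMod.val (mul_OprefL_sub_headI hβ x i)
  exact this ▸ strictAnti_val_Hpref x

variable [NeZero q] {I l v : List (ZMod q)} {a b c : ZMod q}

theorem nextDigit_OprefL_eq_some_iff (hβ : β * d = -1) :
    nextDigit q 1 (k + 2) (OprefL q d) (l ++ [a]) = some c ↔
      ¬ lastN k l ++ [a] ++ [c] <:+: l ++ [a] ∧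
        ∀ c', (β * (c - a)).val < (β * (c' - a)).val →
          lastN k l ++ [a] ++ [c'] <:+: l ++ [a] := by
  rw [nextDigit_eq_some_iff (strictAnti_val_OprefL hβ _), lastN_concat, lastN_one_concat]
  rfl

theorem nextDigit_OprefL_eq_none_iff (hβ : β * d = -1) :
    nextDigit q 1 (k + 1) (OprefL q d) l = none ↔ ∀ c, lastN k l ++ [c] <:+: l :=
  nextDigit_eq_none_iff (surjective_of_strictAnti_comp (strictAnti_val_OprefL hβ _))

theorem nextDigit_Hpref_eq_some_iff :
    nextDigit q 1 (k + 1) (Hpref q) l = some b ↔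
      ¬ lastN k l ++ [b] <:+: l ∧ ∀ t, b.val < t.val → lastN k l ++ [t] <:+: l :=
  nextDigit_eq_some_iff (strictAnti_val_Hpref _)

theorem nextDigit_Hpref_eq_none_iff :
    nextDigit q 1 (k + 1) (Hpref q) l = none ↔ ∀ c, lastN k l ++ [c] <:+: l :=
  nextDigit_eq_none_iff (surjective_of_strictAnti_comp (strictAnti_val_Hpref _))

namespace GreedyStage

theorem concat_infix_of_OprefL_lt (hβ : β * d = -1) (h : GreedyStage q 1 (k + 2) (OprefL q d) I l)
    (hI : I.length = k + 2) (hv : v.length = k) (hc : c ∈ outDigits I l (v ++ [a])) {c' : ZMod q}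
    (hlt : (β * (c - a)).val < (β * (c' - a)).val) : v ++ [a] ++ [c'] <:+: l := by
  refine h.concat_infix_of_lt hI (by simp [hv]) (f := fun c => (β * (c - a)).val)
    (fun x hx => ?_) hc hlt
  have hlast : lastN 1 x = [a] :=
    (eq_lastN_of_suffix ((List.suffix_append v [a]).trans (hx ▸ lastN_suffix (k + 1) x))).symm
  rw [hlast]
  exact strictAnti_val_OprefL hβ [a]

theorem concat_infix_of_Hpref_lt (h : GreedyStage q 1 (k + 1) (Hpref q) I l) (hI : I.length = k + 1)
    (hv : v.length = k) (hc : c ∈ outDigits I l v) {c' : ZMod q} (hlt : c.val < c'.val) :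
    v ++ [c'] <:+: l :=
  h.concat_infix_of_lt hI hv (fun _ _ => strictAnti_val_Hpref _) hc hlt

end GreedyStage

end Preference

/-! ### Exhaustion at the end of the prefer-opposite sequence -/

section Halting

variable {q d k : ℕ} [NeZero q] {β : ZMod q} {l u : List (ZMod q)}

namespace GreedyStage

/-- Repeating the last digit is the least preferred choice. -/
theorem concat_infix_of_concat_self (hβ : β * d = -1) {I v : List (ZMod q)} {a : ZMod q}
    (h : GreedyStage q 1 (k + 2) (OprefL q d) I l) (hI : I.length = k + 2) (hv : v.length = k)
    (ha : a ∈ outDigits I l (v ++ [a])) (c : ZMod q) : v ++ [a] ++ [c] <:+: l := by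
  by_cases hc : c = a
  · exact hc ▸ ha.1
  have hne : β * (c - a) ≠ 0 := fun h0 => hc (by linear_combination (c - a) * hβ - d * h0)
  refine h.concat_infix_of_OprefL_lt hβ hI hv ha ?_
  rwa [sub_self, mul_zero, ZMod.val_zero, pos_iff_ne_zero, ZMod.val_ne_zero]

theorem forall_concat_infix_of_halted (hβ : β * d = -1)
    (h : GreedyStage q 1 (k + 2) (OprefL q d) (List.replicate (k + 2) 0) l)
    (hl : nextDigit q 1 (k + 2) (OprefL q d) l = none) {j : ℕ} (hu : u.length + j = k)
    (c : ZMod q) : u ++ List.replicate (j + 1) 0 ++ [c] <:+: l := by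
  have hI : (List.replicate (k + 2) (0 : ZMod q)).length = k + 2 := List.length_replicate
  have hcur := (nextDigit_OprefL_eq_none_iff hβ).1 hl
  have hend := h.lastN_eq_dropLast_of_forall_concat_infix hI hcur
  have hzero : ∀ c, List.replicate (k + 1) 0 ++ [c] <:+: l := by
    rwa [hend, List.dropLast_replicate] at hcur
  induction u generalizing j c with
  | nil =>
    obtain rfl : j = k := by simpa using hu
    exact hzero c
  | cons a u ih =>
    rw [List.length_cons] at hu
    have hedge : a :: (u ++ List.replicate (j + 2) 0) <:+: l :=
      h.cons_infix_of_forall_concat_infix hI hend (by simp; omega) (ih (by omega)) a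
    have hsplit : a :: (u ++ List.replicate (j + 2) 0) =
        a :: u ++ List.replicate j 0 ++ [0] ++ [0] := by
      simp [List.replicate_succ']
    by_cases hinit : a :: u ++ List.replicate (j + 1) 0 = List.replicate (k + 1) 0
    · exact hinit ▸ hzero c
    rw [List.replicate_succ', ← List.append_assoc] at hinit ⊢
    refine h.concat_infix_of_concat_self hβ hI (by simp; omega) ⟨hsplit ▸ hedge, fun h0 => ?_⟩ c
    rw [List.replicate_succ' (n := k + 1)] at h0
    exact hinit (List.append_singleton_inj.1 h0).1

theorem concat_infix_Dmap_of_halted (hβ : β * d = -1)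
    (h : GreedyStage q 1 (k + 2) (OprefL q d) (List.replicate (k + 2) 0) l)
    (hl : nextDigit q 1 (k + 2) (OprefL q d) l = none) {p : List (ZMod q)} (hp : p.length = k)
    (b : ZMod q) : p ++ [b] <:+: Dmap q β l := by
  have hunit : IsUnit β := .of_mul_eq_one (-d) (by linear_combination -hβ)
  obtain ⟨u, hu, rfl⟩ := exists_Dmap_concat_eq hunit p 0
  have hlift := h.forall_concat_infix_of_halted hβ hl (u := u) (j := 0) (by omega) (-d * b)
  have himage := Dmap_isInfix (β := β) hlift
  rwa [List.replicate_one, Dmap_concat_concat,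
    show β * (-d * b - 0) = b by linear_combination -b * hβ] at himage

end GreedyStage

end Halting

/-! ### The cleaned image of the prefer-opposite sequence -/

section Lempel

variable {q d k : ℕ} [NeZero q] {β : ZMod q} {x g v : List (ZMod q)} {a b c : ZMod q}

theorem ncard_inDigits_le (hβ : IsUnit β)
    (hxg : windows (k + 1) g = windows (k + 1) (Dmap q β x))
    (hv : v.length = k + 1) :
    (inDigits x v).ncard ≤ (inDigits g (Dmap q β v)).ncard := by
  obtain ⟨e, t, rfl⟩ := List.exists_cons_of_length_eq_add_one hv
  refine Set.ncard_le_ncard_of_injOn (fun z => β * (e - z)) (fun z hz => ?_)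
    fun z _ z' _ hzz' => ?_
  · rw [mem_inDigits, ← Dmap_cons_cons, infix_iff_of_windows_eq hxg (by simp_all [length_Dmap])]
    exact Dmap_isInfix hz
  · exact sub_right_injective (hβ.mul_left_cancel hzz')

theorem lift_infix_of_lt (hβ : β * d = -1)
    (hc : nextDigit q 1 (k + 2) (OprefL q d) (x ++ [a]) = some c) {t : ZMod q}
    (ht : (β * (c - a)).val < t.val) :
    lastN k x ++ [a] ++ [a - d * t] <:+: x ++ [a] := by
  refine ((nextDigit_OprefL_eq_some_iff hβ).1 hc).2 _ ?_
  rwa [show β * (a - d * t - a) = t by linear_combination -t * hβ]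

theorem ncard_outDigits_le (hβ : β * d = -1)
    (hg : GreedyStage q 1 (k + 1) (Hpref q) (List.replicate (k + 1) 0) g)
    (hc : nextDigit q 1 (k + 2) (OprefL q d) (x ++ [a]) = some c) {p : List (ZMod q)}
    (hp : p.length = k) (hnew : ¬ p ++ [β * (c - a)] <:+: g) :
    (outDigits (List.replicate (k + 1) 0) g p).ncard ≤
      (outDigits (List.replicate (k + 2) 0) (x ++ [a]) (lastN k x ++ [a])).ncard := by
  have habove (t : ZMod q) (ht : t ∈ outDigits (List.replicate (k + 1) 0) g p) :
      (β * (c - a)).val < t.val := by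
    refine lt_of_le_of_ne (not_lt.1 fun hlt => ?_) fun heq => ?_
    · exact hnew (hg.concat_infix_of_Hpref_lt List.length_replicate hp ht hlt)
    · exact hnew (ZMod.val_injective q heq ▸ ht.1)
  refine Set.ncard_le_ncard_of_injOn (fun t => a - d * t) (fun t ht => ⟨?_, fun hinit => ?_⟩)
    fun t _ t' _ htt' => ?_
  · exact lift_infix_of_lt hβ hc (habove t ht)
  · have hzero (z : ZMod q) (hz : z ∈ lastN k x ++ [a] ++ [a - d * t]) : z = 0 :=
      List.eq_of_mem_replicate (hinit ▸ hz)
    have ha : a = 0 := hzero a (by simp)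
    have hat : a - d * t = 0 := hzero _ (by simp)
    have ht0 : t = 0 := by linear_combination β * hat - β * ha + t * hβ
    simpa [ht0] using habove t ht
  · linear_combination β * htt' + (t - t') * hβ

theorem lastN_Dmap_eq_lastN (hβ : β * d = -1)
    (hx : GreedyStage q 1 (k + 2) (OprefL q d) (List.replicate (k + 2) 0) (x ++ [a]))
    (hg : GreedyStage q 1 (k + 1) (Hpref q) (List.replicate (k + 1) 0) g)
    (hxg : windows (k + 1) g = windows (k + 1) (Dmap q β (x ++ [a])))
    (hc : nextDigit q 1 (k + 2) (OprefL q d) (x ++ [a]) = some c)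
    (hnew : ¬ lastN k (Dmap q β (x ++ [a])) ++ [β * (c - a)] <:+: g) :
    lastN k (Dmap q β (x ++ [a])) = lastN k g := by
  have hunit : IsUnit β := .of_mul_eq_one (-d) (by linear_combination -hβ)
  have hlen := hx.le_length List.length_replicate
  have hv : (lastN (k + 1) (x ++ [a])).length = k + 1 := length_lastN (by omega)
  have hp : (lastN k (Dmap q β (x ++ [a]))).length = k :=
    length_lastN (by rw [length_Dmap]; omega)
  have hin := ncard_inDigits_le hunit hxg hv
  have hout := ncard_outDigits_le hβ hg hc hp hnew
  rw [← lastN_Dmap (by omega)] at hin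
  rw [← lastN_concat] at hout
  have hbal_x := hx.ncard_inDigits_eq List.length_replicate hv
  have hbal_g := hg.ncard_inDigits_eq List.length_replicate hp
  by_contra hne
  rw [if_pos rfl] at hbal_x
  rw [if_neg hne] at hbal_g
  omega

theorem nextDigit_Hpref_eq_of_lastN_eq (hβ : β * d = -1) (hlen : k + 1 ≤ (x ++ [a]).length)
    (hxg : windows (k + 1) g = windows (k + 1) (Dmap q β (x ++ [a])))
    (hc : nextDigit q 1 (k + 2) (OprefL q d) (x ++ [a]) = some c)
    (hnew : ¬ lastN k (Dmap q β (x ++ [a])) ++ [β * (c - a)] <:+: g)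
    (hlast : lastN k (Dmap q β (x ++ [a])) = lastN k g) :
    nextDigit q 1 (k + 1) (Hpref q) g = some (β * (c - a)) := by
  refine nextDigit_Hpref_eq_some_iff.2 ⟨hlast ▸ hnew, fun t ht => ?_⟩
  have himage := Dmap_isInfix (β := β) (lift_infix_of_lt hβ hc ht)
  rw [Dmap_concat_concat, ← lastN_concat, ← lastN_Dmap hlen, hlast,
    show β * (a - d * t - a) = t by linear_combination -t * hβ] at himage
  refine (infix_iff_of_windows_eq hxg ?_).2 himage
  rw [← hlast, length_lastN_concat (by rw [length_Dmap]; omega)]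

theorem greedyStage_cleaned_Dmap_and_windows_eq (hβ : β * d = -1)
    (hx : GreedyStage q 1 (k + 2) (OprefL q d) (List.replicate (k + 2) 0) x) :
    GreedyStage q 1 (k + 1) (Hpref q) (List.replicate (k + 1) 0)
        (cleaned q (k + 1) (Dmap q β x)) ∧
      windows (k + 1) (cleaned q (k + 1) (Dmap q β x)) = windows (k + 1) (Dmap q β x) := by
  induction hx with
  | refl =>
    rw [Dmap_replicate, cleaned_of_length_le List.length_replicate.le]
    exact ⟨.refl, rfl⟩
  | @tail x _ hx hstep ih =>
    obtain ⟨c, hc, rfl⟩ := hstep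
    obtain ⟨hg, hxg⟩ := ih
    have hlen := GreedyStage.le_length hx List.length_replicate
    obtain ⟨x, a, rfl⟩ := (List.eq_nil_or_concat' x).resolve_left
      (List.length_pos_iff.1 (by omega))
    have hDlen : k ≤ (Dmap q β (x ++ [a])).length := by rw [length_Dmap]; omega
    have hwlen := length_lastN_concat hDlen (β * (c - a))
    rw [Dmap_concat_concat, cleaned_concat, lastN_concat, windows_concat hDlen]
    split_ifs with hrep
    · have hmem : lastN k (Dmap q β (x ++ [a])) ++ [β * (c - a)] ∈
          windows (k + 1) (Dmap q β (x ++ [a])) := ⟨hwlen, hrep⟩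
      exact ⟨hg, by rw [hxg, Set.insert_eq_of_mem hmem]⟩
    · have hnew := mt (infix_iff_of_windows_eq hxg hwlen).1 hrep
      have hlast := lastN_Dmap_eq_lastN hβ hx hg hxg hc hnew
      have hb := nextDigit_Hpref_eq_of_lastN_eq hβ (by omega) hxg hc hnew hlast
      have hglen := hg.le_length List.length_replicate
      exact ⟨hg.tail ⟨_, hb, rfl⟩, by rw [windows_concat (by omega), hxg, hlast]⟩

end Lempel

/-- Let `β = d⁻¹(q-1) (mod q)`.  Mapping the generalized
prefer-opposite sequence `o_n` through `D_β` and deleting every digit whose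
ending `(n-1)`-window is a repetition yields exactly the prefer-higher
de Bruijn sequence `h_{n-1}` of order `n-1`. -/
theorem Dmap_oSeq_cleaned_eq_hSeq (q n d : ℕ) (hq : 2 ≤ q) (hn : 2 ≤ n)
    (hd : Nat.Coprime d q) :
    cleaned q (n - 1)
        (Dmap q ((d : ZMod q)⁻¹ * ((q - 1 : ℕ) : ZMod q)) (oSeq q n d)) =
      hSeq q (n - 1) := by
  obtain ⟨k, rfl⟩ : ∃ k, n = k + 2 := ⟨n - 2, by omega⟩
  have : NeZero q := ⟨by omega⟩
  have hβ : (d : ZMod q)⁻¹ * ((q - 1 : ℕ) : ZMod q) * d = -1 := by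
    rw [Nat.cast_sub (by omega), ZMod.natCast_self, Nat.cast_one]
    linear_combination -ZMod.coe_mul_inv_eq_one d hd
  have hstage : GreedyStage q 1 (k + 2) (OprefL q d) (List.replicate (k + 2) 0)
      (oSeq q (k + 2) d) := greedyStage_greedy
  have hhalt : nextDigit q 1 (k + 2) (OprefL q d) (oSeq q (k + 2) d) = none :=
    GreedyStage.nextDigit_greedy List.length_replicate
  obtain ⟨hg, hwindows⟩ := greedyStage_cleaned_Dmap_and_windows_eq hβ hstage
  have hlen := (Nat.le_succ k).trans (hg.le_length List.length_replicate)
  refine (hg.greedy_eq List.length_replicate (nextDigit_Hpref_eq_none_iff.2 fun b => ?_)).symm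
  rw [infix_iff_of_windows_eq hwindows (length_lastN_concat hlen b)]
  exact hstage.concat_infix_Dmap_of_halted hβ hhalt (length_lastN hlen) b

end PaperDB
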